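/- arXiv:1608.02028 — 4 statements merged into one kernel-verified Lean document; each statement's English description precedes it below -/
import Mathlib

section
/- The extended Heston diffusion coefficient satisfies the commutativity (Lie bracket) condition: for every i ≠ j in {1,…,n} and every (y,s) ∈ ℝⁿ × ℝ, (Dσᵢ(y,s))σⱼ(y,s) = (0,…,0, s ρ² yᵢ yⱼ)ᵀ ∈ ℝ^{n+1}; in particular (Dσᵢ)σⱼ = (Dσⱼ)σᵢ for all i, j. -/
/-!
Only the last component of `σᵢ` depends on the state, so `(Dσᵢ) v` is `ρ (v_s yᵢ + s v_{yᵢ})` times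
the last basis vector. For `v = σⱼ` one has `v_s = ρ s yⱼ`, whose contribution `ρ² s yᵢ yⱼ` is
symmetric in `i` and `j`, while `v_{yᵢ}` is the constant `(i, j)` entry of the volatility matrix.
-/

section Bracket

variable {𝕜 : Type*} [NontriviallyNormedField 𝕜] {n : ℕ}

section FDeriv

variable {E F : Type*} [NormedAddCommGroup E] [NormedSpace 𝕜 E]
  [NormedAddCommGroup F] [NormedSpace 𝕜 F]

theorem fderiv_snoc_const_apply (c : Fin n → F) {f : E → F} {x : E}
    (hf : DifferentiableAt 𝕜 f x) (v : E) :
    fderiv 𝕜 (fun z => (Fin.snoc c (f z) : Fin (n + 1) → F)) x v =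
      Fin.snoc (fun _ => 0) (fderiv 𝕜 f x v) := by
  have snoc_eq_update : (fun z => (Fin.snoc c (f z) : Fin (n + 1) → F)) =
      Function.update (Fin.snoc c 0) (Fin.last n) ∘ f :=
    funext fun _ => (Fin.update_snoc_last ..).symm
  rw [snoc_eq_update, fderiv_comp x (hasFDerivAt_update _ _).differentiableAt hf, fderiv_update]
  ext k
  cases k using Fin.lastCases <;> simp

theorem fderiv_const_mul_clm_mul_clm_apply (a : 𝕜) (f g : E →L[𝕜] 𝕜) (x v : E) :
    fderiv 𝕜 (fun z => a * f z * g z) x v = a * (f v * g x + f x * g v) := by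
  rw [fderiv_fun_mul (by fun_prop) (by fun_prop), fderiv_const_mul (by fun_prop), f.fderiv,
    g.fderiv]
  simp only [add_apply, smul_apply, smul_eq_mul]
  ring

end FDeriv

/-- The `j`-th diffusion column `(A₁ⱼ, …, Aₙⱼ, ρ s yⱼ)` of an extended Heston model whose
volatility factors `y` have the constant diffusion matrix `A`; the classical model is
`A = (κ / 2) • 1`. The state `x = (y₁, …, yₙ, s)` has the price `s` as its last coordinate. -/
def extendedHestonDiffusion (A : Matrix (Fin n) (Fin n) 𝕜) (ρ : 𝕜) (j : Fin n)
    (x : Fin (n + 1) → 𝕜) : Fin (n + 1) → 𝕜 :=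
  Fin.snoc (A.col j) (ρ * x (Fin.last n) * x j.castSucc)

theorem fderiv_extendedHestonDiffusion_apply (A : Matrix (Fin n) (Fin n) 𝕜) (ρ : 𝕜) (i : Fin n)
    (x v : Fin (n + 1) → 𝕜) :
    fderiv 𝕜 (extendedHestonDiffusion A ρ i) x v =
      Fin.snoc (fun _ => 0)
        (ρ * (v (Fin.last n) * x i.castSucc + x (Fin.last n) * v i.castSucc)) := by
  unfold extendedHestonDiffusion
  rw [fderiv_snoc_const_apply _ (by fun_prop)]
  exact congrArg _
    (fderiv_const_mul_clm_mul_clm_apply ρ (.proj (Fin.last n)) (.proj i.castSucc) x v)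

theorem fderiv_extendedHestonDiffusion_apply_extendedHestonDiffusion
    (A : Matrix (Fin n) (Fin n) 𝕜) (ρ : 𝕜) (i j : Fin n) (x : Fin (n + 1) → 𝕜) :
    fderiv 𝕜 (extendedHestonDiffusion A ρ i) x (extendedHestonDiffusion A ρ j x) =
      Fin.snoc (fun _ => 0)
        (x (Fin.last n) * ρ ^ 2 * x i.castSucc * x j.castSucc + ρ * x (Fin.last n) * A i j) := by
  rw [fderiv_extendedHestonDiffusion_apply]
  simp only [extendedHestonDiffusion, Fin.snoc_last, Fin.snoc_castSucc, Matrix.col_apply]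
  congr 1
  ring

theorem extended_heston_bracket_general (A : Matrix (Fin n) (Fin n) 𝕜) (ρ : 𝕜) :
    (∀ i j : Fin n, A i j = 0 → ∀ x : Fin (n + 1) → 𝕜,
      fderiv 𝕜 (extendedHestonDiffusion A ρ i) x (extendedHestonDiffusion A ρ j x) =
        Fin.snoc (fun _ => (0 : 𝕜))
          (x (Fin.last n) * ρ ^ 2 * x i.castSucc * x j.castSucc)) ∧
    (∀ i j : Fin n, A i j = A j i → ∀ x : Fin (n + 1) → 𝕜,
      fderiv 𝕜 (extendedHestonDiffusion A ρ i) x (extendedHestonDiffusion A ρ j x) =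
        fderiv 𝕜 (extendedHestonDiffusion A ρ j) x (extendedHestonDiffusion A ρ i x)) := by
  simp only [fderiv_extendedHestonDiffusion_apply_extendedHestonDiffusion]
  refine ⟨fun i j hij x => ?_, fun i j hij x => ?_⟩
  · rw [hij, mul_zero, add_zero]
  · rw [hij, mul_right_comm _ (x i.castSucc)]

end Bracket

/-- The extended Heston diffusion coefficient satisfies the commutativity
(Lie bracket) condition.  The state is `x = (y₁,…,yₙ,s) ∈ ℝ^{n+1}` with
`yⱼ = x j.castSucc` and `s = x (Fin.last n)`, and
`σⱼ(y,s) = (κ/2)·eⱼ + ρ·s·yⱼ·e_{n+1}`. -/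
theorem extended_heston_bracket (n : ℕ) (hn : 1 ≤ n) (κ ρ : ℝ) (hκ : 0 < κ)
    (σ : Fin n → (Fin (n + 1) → ℝ) → (Fin (n + 1) → ℝ))
    (hσ : ∀ j, σ j = fun x =>
      Fin.snoc (fun i => if i = j then κ / 2 else 0)
        (ρ * x (Fin.last n) * x j.castSucc)) :
    (∀ i j : Fin n, i ≠ j → ∀ x : Fin (n + 1) → ℝ,
      fderiv ℝ (σ i) x (σ j x) =
        Fin.snoc (fun _ => (0 : ℝ))
          (x (Fin.last n) * ρ ^ 2 * x i.castSucc * x j.castSucc)) ∧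
    (∀ i j : Fin n, ∀ x : Fin (n + 1) → ℝ,
      fderiv ℝ (σ i) x (σ j x) = fderiv ℝ (σ j) x (σ i x)) := by
  obtain rfl : σ = extendedHestonDiffusion (.diagonal fun _ => κ / 2) ρ := funext hσ
  have ⟨hoff, hsymm⟩ := extended_heston_bracket_general (.diagonal fun _ : Fin n => κ / 2) ρ
  exact ⟨fun i j hij => hoff i j (Matrix.diagonal_apply_ne _ hij),
    fun i j => hsymm i j ((Matrix.isSymm_diagonal _).apply j i)⟩
end

section
/- Pushing the second diffusion column through the first diffeomorphism gives α₂: for every x = (x₁,x₂,x₃) with x₃ > 0, (DΛ₁(Λ₁⁻¹(x)))·σ₂(Λ₁⁻¹(x)) = (0, κ/2, ρ·x₂·x₃)ᵀ, where Λ₁(y₁,y₂,y₃) = ((2/κ)y₁, y₂, y₃·exp(-(ρ/κ)y₁²)), Λ₁⁻¹(x₁,x₂,x₃) = ((κ/2)x₁, x₂, x₃·exp((ρκ/4)x₁²)), and σ₂(y₁,y₂,y₃) = (0, κ/2, ρ·y₂·y₃)ᵀ. -/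
/-!
The diffusion column `σ₂` has no component along the first coordinate, and with the first
coordinate frozen `Λ₁` is affine: it fixes the second coordinate and multiplies the third by a
constant. As the third component of `σ₂` is linear in the third coordinate, `DΛ₁(y) σ₂(y)` is
`σ₂(Λ₁(y))`, that is, `Λ₁` leaves the vector field `σ₂` invariant. Now take `y = Λ₁⁻¹(x)`.
-/

section SkewScaling

variable {𝕜 E F G A : Type*}

/-- The skew product over a map `f` of the first coordinate that fixes the second coordinate and
scales the third by a factor `g` depending on the first. Both `Λ₁` and `Λ₁⁻¹` have this form. -/
def skewScaling [Mul A] (f : E → G) (g : E → A) (y : E × F × A) : G × F × A :=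
  (f y.1, y.2.1, y.2.2 * g y.1)

/-- The vector field with no component along the first coordinate whose other components depend
on the second coordinate only, up to linearity of the last one in the third coordinate. The
diffusion column `σ₂` has this form. -/
def verticalField [Zero E] [Mul A] (b : F → F) (c : F → A) (y : E × F × A) : E × F × A :=
  (0, b y.2.1, c y.2.1 * y.2.2)

theorem skewScaling_leftInverse [Monoid A] {f : E → G} {f' : G → E} {g : E → A} {g' : G → A}
    (hf : Function.LeftInverse f f') (hg : ∀ t, g' t * g (f' t) = 1) :
    Function.LeftInverse (skewScaling (F := F) f g) (skewScaling f' g') := by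
  rintro ⟨t, u, v⟩
  simp only [skewScaling, hf t, mul_assoc, hg t, mul_one]

variable [NontriviallyNormedField 𝕜]
  [NormedAddCommGroup E] [NormedSpace 𝕜 E] [NormedAddCommGroup F] [NormedSpace 𝕜 F]
  [NormedAddCommGroup G] [NormedSpace 𝕜 G] [NormedRing A] [NormedAlgebra 𝕜 A]

theorem fderiv_apply_zero_prodMk {f : E × F → G} {p : E × F} (hf : DifferentiableAt 𝕜 f p)
    (v : F) : fderiv 𝕜 f p (0, v) = fderiv 𝕜 (fun z => f (p.1, z)) p.2 v := by
  have hslice : HasFDerivAt (fun z => f (p.1, z))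
      ((fderiv 𝕜 f p).comp (ContinuousLinearMap.inr 𝕜 E F)) p.2 :=
    hf.hasFDerivAt.comp p.2 (hasFDerivAt_prodMk_right p.1 p.2)
  rw [hslice.fderiv, ContinuousLinearMap.comp_apply, ContinuousLinearMap.inr_apply]

theorem fderiv_skewScaling_apply_zero_prodMk {f : E → G} {g : E → A} {y : E × F × A}
    (hf : DifferentiableAt 𝕜 f y.1) (hg : DifferentiableAt 𝕜 g y.1) (v : F × A) :
    fderiv 𝕜 (skewScaling f g) y (0, v) = (0, v.1, v.2 * g y.1) := by
  have hdiff : DifferentiableAt 𝕜 (skewScaling f g) y := by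
    unfold skewScaling
    fun_prop
  have hscale : HasFDerivAt (fun z : F × A => z.2 * g y.1) _ y.2 :=
    (hasFDerivAt_snd (𝕜 := 𝕜)).mul_const' (g y.1)
  have hslice : HasFDerivAt (fun z => skewScaling f g (y.1, z)) _ y.2 :=
    (hasFDerivAt_const (f y.1) y.2).prodMk (hasFDerivAt_fst.prodMk hscale)
  rw [fderiv_apply_zero_prodMk hdiff, hslice.fderiv]
  simp

theorem fderiv_skewScaling_verticalField {f : E → G} {g : E → A} {y : E × F × A}
    (hf : DifferentiableAt 𝕜 f y.1) (hg : DifferentiableAt 𝕜 g y.1) (b : F → F) (c : F → A) :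
    fderiv 𝕜 (skewScaling f g) y (verticalField b c y) =
      verticalField b c (skewScaling f g y) := by
  simp only [verticalField, fderiv_skewScaling_apply_zero_prodMk hf hg, skewScaling, mul_assoc]

end SkewScaling

theorem exp_mul_exp_neg_rescale_eq_one (κ ρ t : ℝ) :
    Real.exp (ρ * κ / 4 * t ^ 2) * Real.exp (-(ρ / κ) * (κ / 2 * t) ^ 2) = 1 := by
  have hexponents : ρ * κ / 4 * t ^ 2 + -(ρ / κ) * (κ / 2 * t) ^ 2 = 0 := by
    field_simp
    ring
  rw [← Real.exp_add, hexponents, Real.exp_zero]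

theorem lambda_one_pushforward_sigma_two_general (κ ρ : ℝ) (hκ : κ ≠ 0)
    (Λ₁ Λ₁inv σ₂ : ℝ × ℝ × ℝ → ℝ × ℝ × ℝ)
    (hΛ₁ : Λ₁ = fun y => ((2 / κ) * y.1, y.2.1, y.2.2 * Real.exp (-(ρ / κ) * y.1 ^ 2)))
    (hΛ₁inv : Λ₁inv = fun x => ((κ / 2) * x.1, x.2.1, x.2.2 * Real.exp ((ρ * κ / 4) * x.1 ^ 2)))
    (hσ₂ : σ₂ = fun y => (0, κ / 2, ρ * y.2.1 * y.2.2)) (x : ℝ × ℝ × ℝ) :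
    fderiv ℝ Λ₁ (Λ₁inv x) (σ₂ (Λ₁inv x)) = (0, κ / 2, ρ * x.2.1 * x.2.2) := by
  have hskew : Λ₁ = skewScaling (fun t => 2 / κ * t) (fun t => Real.exp (-(ρ / κ) * t ^ 2)) :=
    hΛ₁
  have hskewInv : Λ₁inv =
      skewScaling (fun t => κ / 2 * t) (fun t => Real.exp (ρ * κ / 4 * t ^ 2)) :=
    hΛ₁inv
  have hvertical : σ₂ = verticalField (fun _ => κ / 2) (fun u => ρ * u) := hσ₂
  have hright : Λ₁ (Λ₁inv x) = x := by
    rw [hskew, hskewInv]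
    apply skewScaling_leftInverse
    · exact fun t => by field_simp
    · exact exp_mul_exp_neg_rescale_eq_one κ ρ
  have hinvariant (y : ℝ × ℝ × ℝ) : fderiv ℝ Λ₁ y (σ₂ y) = σ₂ (Λ₁ y) := by
    rw [hskew, hvertical]
    exact fderiv_skewScaling_verticalField (by fun_prop) (by fun_prop) _ _
  rw [hinvariant, hright, hσ₂]

/-- Pushing the second diffusion column through the first diffeomorphism gives
`α₂`: `(DΛ₁(Λ₁⁻¹(x)))·σ₂(Λ₁⁻¹(x)) = (0, κ/2, ρ·x₂·x₃)ᵀ` for `x₃ > 0`. -/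
theorem lambda_one_pushforward_sigma_two (κ ρ : ℝ) (hκ : 0 < κ)
    (Λ₁ Λ₁inv σ₂ : ℝ × ℝ × ℝ → ℝ × ℝ × ℝ)
    (hΛ₁ : Λ₁ = fun y => ((2 / κ) * y.1, y.2.1, y.2.2 * Real.exp (-(ρ / κ) * y.1 ^ 2)))
    (hΛ₁inv : Λ₁inv = fun x => ((κ / 2) * x.1, x.2.1, x.2.2 * Real.exp ((ρ * κ / 4) * x.1 ^ 2)))
    (hσ₂ : σ₂ = fun y => (0, κ / 2, ρ * y.2.1 * y.2.2)) :
    ∀ x : ℝ × ℝ × ℝ, 0 < x.2.2 →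
      fderiv ℝ Λ₁ (Λ₁inv x) (σ₂ (Λ₁inv x)) = (0, κ / 2, ρ * x.2.1 * x.2.2) :=
  fun x _ => lambda_one_pushforward_sigma_two_general κ ρ hκ.ne' Λ₁ Λ₁inv σ₂ hΛ₁ hΛ₁inv hσ₂ x
end

section
/- The second diffeomorphism rectifies α₂: for every x = (x₁,x₂,x₃) with x₃ > 0, (DΛ₂(Λ₂⁻¹(x)))·α₂(Λ₂⁻¹(x)) = (0,1,0)ᵀ, where Λ₂(y₁,y₂,y₃) = (y₁, (2/κ)y₂, y₃·exp(-(ρ/κ)y₂²)), Λ₂⁻¹(x₁,x₂,x₃) = (x₁, (κ/2)x₂, x₃·exp((ρκ/4)x₂²)), and α₂(x₁,x₂,x₃) = (0, κ/2, ρ·x₂·x₃)ᵀ. -/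
/-!
The field `(0, c, b • z)` has vanishing first component, so a map of the form
`(p, s, z) ↦ (p, φ s, μ s • z)` straightens it as soon as `φ' = 1 / c` and `μ` is an integrating
factor of `z' = (b / c) z`, i.e. `μ' = -(b / c) μ`: the two contributions to the last component of
the pushforward then cancel. For `c = κ / 2` and `b = ρ s` this gives `φ s = (2 / κ) s` and
`μ s = exp (-(ρ / κ) s ^ 2)`.
-/

section FiberwiseScaling

variable {𝕜 E F : Type*} [NontriviallyNormedField 𝕜]
  [NormedAddCommGroup E] [NormedSpace 𝕜 E] [NormedAddCommGroup F] [NormedSpace 𝕜 F]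
  {φ μ : 𝕜 → 𝕜} {y : E × 𝕜 × F}

theorem fderiv_fst_comp_smul_apply {φ' μ' : 𝕜} (hφ : HasDerivAt φ φ' y.2.1)
    (hμ : HasDerivAt μ μ' y.2.1) (v : E × 𝕜 × F) :
    fderiv 𝕜 (fun y : E × 𝕜 × F => (y.1, φ y.2.1, μ y.2.1 • y.2.2)) y v =
      (v.1, v.2.1 * φ', μ y.2.1 • v.2.2 + (v.2.1 * μ') • y.2.2) := by
  have hsnd : HasFDerivAt (fun y : E × 𝕜 × F => y.2) (.snd 𝕜 E (𝕜 × F)) y := hasFDerivAt_snd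
  have hbase := hφ.comp_hasFDerivAt y hsnd.fst
  have hfiber := (hμ.comp_hasFDerivAt y hsnd.fst).smul hsnd.snd
  have hmap := hasFDerivAt_fst.prodMk (hbase.prodMk hfiber)
  refine (DFunLike.congr_fun hmap.fderiv v).trans ?_
  simp [mul_comm]

theorem fderiv_fst_comp_smul_apply_of_integratingFactor {b c : 𝕜} (hc : c ≠ 0)
    (hφ : HasDerivAt φ c⁻¹ y.2.1) (hμ : HasDerivAt μ (-(b / c) * μ y.2.1) y.2.1) :
    fderiv 𝕜 (fun y : E × 𝕜 × F => (y.1, φ y.2.1, μ y.2.1 • y.2.2)) y (0, c, b • y.2.2) =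
      (0, 1, 0) := by
  have hcancel : μ y.2.1 * b + c * (-(b / c) * μ y.2.1) = 0 := by
    field_simp
    ring
  rw [fderiv_fst_comp_smul_apply hφ hμ, mul_inv_cancel₀ hc, smul_smul, ← add_smul, hcancel,
    zero_smul]

end FiberwiseScaling

theorem hasDerivAt_exp_const_mul_sq (a s : ℝ) :
    HasDerivAt (fun s => Real.exp (a * s ^ 2)) (2 * a * s * Real.exp (a * s ^ 2)) s := by
  convert ((hasDerivAt_pow 2 s).const_mul a).exp using 1
  push_cast
  ring

theorem lambda_two_rectifies_general {κ : ℝ} (ρ : ℝ) (hκ : κ ≠ 0) (y : ℝ × ℝ × ℝ) :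
    fderiv ℝ (fun y : ℝ × ℝ × ℝ =>
        (y.1, (2 / κ) * y.2.1, y.2.2 * Real.exp (-(ρ / κ) * y.2.1 ^ 2))) y
      (0, κ / 2, ρ * y.2.1 * y.2.2) = (0, 1, 0) := by
  have hφ : HasDerivAt (fun s => (2 / κ) * s) (κ / 2)⁻¹ y.2.1 := by
    simpa only [inv_div, mul_one] using (hasDerivAt_id' y.2.1).const_mul (2 / κ)
  have hμ : HasDerivAt (fun s => Real.exp (-(ρ / κ) * s ^ 2))
      (-(ρ * y.2.1 / (κ / 2)) * Real.exp (-(ρ / κ) * y.2.1 ^ 2)) y.2.1 := by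
    convert hasDerivAt_exp_const_mul_sq (-(ρ / κ)) y.2.1 using 2
    field_simp
  simpa only [smul_eq_mul, mul_comm (Real.exp _)] using
    fderiv_fst_comp_smul_apply_of_integratingFactor (div_ne_zero hκ two_ne_zero) hφ hμ

/-- The second diffeomorphism rectifies `α₂`:
`(DΛ₂(Λ₂⁻¹(x)))·α₂(Λ₂⁻¹(x)) = (0,1,0)ᵀ` for every `x` with `x₃ > 0`. -/
theorem lambda_two_rectifies (κ ρ : ℝ) (hκ : 0 < κ)
    (Λ₂ Λ₂inv α₂ : ℝ × ℝ × ℝ → ℝ × ℝ × ℝ)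
    (hΛ₂ : Λ₂ = fun y => (y.1, (2 / κ) * y.2.1, y.2.2 * Real.exp (-(ρ / κ) * y.2.1 ^ 2)))
    (hΛ₂inv : Λ₂inv = fun x => (x.1, (κ / 2) * x.2.1, x.2.2 * Real.exp ((ρ * κ / 4) * x.2.1 ^ 2)))
    (hα₂ : α₂ = fun x => (0, κ / 2, ρ * x.2.1 * x.2.2)) :
    ∀ x : ℝ × ℝ × ℝ, 0 < x.2.2 →
      fderiv ℝ Λ₂ (Λ₂inv x) (α₂ (Λ₂inv x)) = (0, 1, 0) := by
  subst hΛ₂ hα₂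
  exact fun x _ => lambda_two_rectifies_general ρ hκ.ne' (Λ₂inv x)
end

section
/- The transformed Stratonovich drift of the extended Heston system is explicitly computable: for every x = (x₁,x₂,x₃) with x₃ > 0, (DΛ(Λ⁻¹(x)))·h(Λ⁻¹(x)) = (-(ϱ/2)x₁, -(ϱ/2)x₂, x₃·[μ - κρ/2 + (κρϱ/4 - κ²ρ²/8)(x₁² + x₂²)])ᵀ, where h(y₁,y₂,y₃) = (-(ϱ/2)y₁, -(ϱ/2)y₂, μy₃ - (κρ/2)y₃ - (ρ²/2)y₃(y₁²+y₂²))ᵀ, Λ(y₁,y₂,y₃) = ((2/κ)y₁, (2/κ)y₂, y₃·exp(-(ρ/κ)(y₁²+y₂²))) and Λ⁻¹(x₁,x₂,x₃) = ((κ/2)x₁, (κ/2)x₂, x₃·exp((ρκ/4)(x₁²+x₂²))). -/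
/-!
Both `Λ` and `Λ⁻¹` belong to the family
`S c a : (y₁, y₂, y₃) ↦ (c y₁, c y₂, y₃ exp (a (y₁² + y₂²)))`. The differential of `S c a` at `y`
sends a vector `(k y₁, k y₂, y₃ g)`, and `h y` has this form, to
`(k x₁, k x₂, x₃ (g + 2 a k (y₁² + y₂²)))` with `x = S c a y`: the exponential weight is absorbed
into `x₃` and only shifts the growth rate `g`.
-/

section Calculus

variable {E : Type*} [NormedAddCommGroup E] [NormedSpace ℝ E] {f g : E → ℝ} {f' g' : E →L[ℝ] ℝ}
  {y : E}

theorem hasFDerivAt_mul_exp (hf : HasFDerivAt f f' y) (hg : HasFDerivAt g g' y) :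
    HasFDerivAt (fun z => f z * Real.exp (g z)) (Real.exp (g y) • (f' + f y • g')) y := by
  refine (hf.mul hg.exp).congr_fderiv ?_
  module

theorem hasFDerivAt_sq_add_sq (hf : HasFDerivAt f f' y) (hg : HasFDerivAt g g' y) :
    HasFDerivAt (fun z => f z ^ 2 + g z ^ 2) ((2 * f y) • f' + (2 * g y) • g') y := by
  refine ((hf.pow 2).add (hg.pow 2)).congr_fderiv ?_
  simp

end Calculus

/-- The map `S c a` scaling the first two coordinates by `c` and multiplying the third by the
Gaussian weight `exp (a (y₁² + y₂²))`. It is defined on all of `ℝ³` and preserves the half-space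
`y₃ > 0`; the paper's `Λ` is `S (2/κ) (-ρ/κ)` and its `Λ⁻¹` is `S (κ/2) (ρκ/4)`. -/
noncomputable def gaussianScaling (c a : ℝ) (y : ℝ × ℝ × ℝ) : ℝ × ℝ × ℝ :=
  (c * y.1, c * y.2.1, y.2.2 * Real.exp (a * (y.1 ^ 2 + y.2.1 ^ 2)))

/-- The Fisk–Stratonovich drift `h` of the `n = 2` extended Heston system, extended from the
half-space `y₃ > 0` to `ℝ³` by the same formula. -/
noncomputable def hestonDrift (κ ρ ϱ μ : ℝ) (y : ℝ × ℝ × ℝ) : ℝ × ℝ × ℝ :=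
  (-(ϱ / 2) * y.1, -(ϱ / 2) * y.2.1,
    μ * y.2.2 - (κ * ρ / 2) * y.2.2 - (ρ ^ 2 / 2) * y.2.2 * (y.1 ^ 2 + y.2.1 ^ 2))

theorem gaussianScaling_gaussianScaling (c a d b : ℝ) (x : ℝ × ℝ × ℝ) :
    gaussianScaling c a (gaussianScaling d b x) = gaussianScaling (c * d) (b + a * d ^ 2) x := by
  simp only [gaussianScaling, mul_assoc, ← Real.exp_add]
  ring_nf

theorem gaussianScaling_one_zero (x : ℝ × ℝ × ℝ) : gaussianScaling 1 0 x = x := by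
  simp [gaussianScaling]

theorem gaussianScaling_rightInverse {c a d b : ℝ} (hscale : c * d = 1)
    (hweight : b + a * d ^ 2 = 0) :
    Function.RightInverse (gaussianScaling d b) (gaussianScaling c a) := by
  intro x
  rw [gaussianScaling_gaussianScaling, hscale, hweight, gaussianScaling_one_zero]

theorem fderiv_gaussianScaling_apply (c a : ℝ) (y v : ℝ × ℝ × ℝ) :
    fderiv ℝ (gaussianScaling c a) y v = (c * v.1, c * v.2.1,
      Real.exp (a * (y.1 ^ 2 + y.2.1 ^ 2)) *
        (v.2.2 + y.2.2 * (a * (2 * y.1 * v.1 + 2 * y.2.1 * v.2.1)))) := by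
  have hfst : HasFDerivAt (fun z : ℝ × ℝ × ℝ => z.1) (.fst ℝ ℝ (ℝ × ℝ)) y := hasFDerivAt_fst
  have hsnd : HasFDerivAt (fun z : ℝ × ℝ × ℝ => z.2) (.snd ℝ ℝ (ℝ × ℝ)) y := hasFDerivAt_snd
  have hweight := (hasFDerivAt_sq_add_sq hfst hsnd.fst).const_mul a
  have hscaling : HasFDerivAt (gaussianScaling c a) _ y :=
    (hfst.const_mul c).prodMk
      ((hsnd.fst.const_mul c).prodMk (hasFDerivAt_mul_exp hsnd.snd hweight))
  rw [hscaling.fderiv]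
  simp [mul_add]

theorem fderiv_gaussianScaling_apply_radial (c a k g : ℝ) (y : ℝ × ℝ × ℝ) :
    fderiv ℝ (gaussianScaling c a) y (k * y.1, k * y.2.1, y.2.2 * g) =
      (k * (gaussianScaling c a y).1, k * (gaussianScaling c a y).2.1,
        (gaussianScaling c a y).2.2 * (g + 2 * a * k * (y.1 ^ 2 + y.2.1 ^ 2))) := by
  rw [fderiv_gaussianScaling_apply]
  simp only [gaussianScaling, Prod.mk.injEq]
  refine ⟨?_, ?_, ?_⟩ <;> ring

theorem hestonDrift_eq (κ ρ ϱ μ : ℝ) (y : ℝ × ℝ × ℝ) :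
    hestonDrift κ ρ ϱ μ y = (-(ϱ / 2) * y.1, -(ϱ / 2) * y.2.1,
      y.2.2 * (μ - κ * ρ / 2 - ρ ^ 2 / 2 * (y.1 ^ 2 + y.2.1 ^ 2))) := by
  simp only [hestonDrift, Prod.mk.injEq, true_and]
  ring

theorem transformed_drift_general {κ : ℝ} (hκ : κ ≠ 0) (ρ ϱ μ : ℝ) (x : ℝ × ℝ × ℝ) :
    fderiv ℝ (gaussianScaling (2 / κ) (-(ρ / κ))) (gaussianScaling (κ / 2) (ρ * κ / 4) x)
        (hestonDrift κ ρ ϱ μ (gaussianScaling (κ / 2) (ρ * κ / 4) x)) =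
      (-(ϱ / 2) * x.1, -(ϱ / 2) * x.2.1,
        x.2.2 * (μ - κ * ρ / 2 +
          (κ * ρ * ϱ / 4 - κ ^ 2 * ρ ^ 2 / 8) * (x.1 ^ 2 + x.2.1 ^ 2))) := by
  have hscale : 2 / κ * (κ / 2) = 1 := by field_simp
  have hweight : ρ * κ / 4 + -(ρ / κ) * (κ / 2) ^ 2 = 0 := by field_simp; ring
  rw [hestonDrift_eq, fderiv_gaussianScaling_apply_radial,
    gaussianScaling_rightInverse hscale hweight x]
  simp only [gaussianScaling, Prod.mk.injEq, true_and]
  field_simp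
  ring

/-- The transformed Stratonovich drift of the `n = 2` extended Heston system:
`(DΛ(Λ⁻¹(x)))·h(Λ⁻¹(x)) = (-(ϱ/2)x₁, -(ϱ/2)x₂,
x₃·[μ - κρ/2 + (κρϱ/4 - κ²ρ²/8)(x₁² + x₂²)])ᵀ` for `x₃ > 0`. -/
theorem transformed_drift (κ ρ ϱ μ : ℝ) (hκ : 0 < κ)
    (Λ Λinv h : ℝ × ℝ × ℝ → ℝ × ℝ × ℝ)
    (hΛ : Λ = fun y => ((2 / κ) * y.1, (2 / κ) * y.2.1,
      y.2.2 * Real.exp (-(ρ / κ) * (y.1 ^ 2 + y.2.1 ^ 2))))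
    (hΛinv : Λinv = fun x => ((κ / 2) * x.1, (κ / 2) * x.2.1,
      x.2.2 * Real.exp ((ρ * κ / 4) * (x.1 ^ 2 + x.2.1 ^ 2))))
    (hh : h = fun y => (-(ϱ / 2) * y.1, -(ϱ / 2) * y.2.1,
      μ * y.2.2 - (κ * ρ / 2) * y.2.2 - (ρ ^ 2 / 2) * y.2.2 * (y.1 ^ 2 + y.2.1 ^ 2))) :
    ∀ x : ℝ × ℝ × ℝ, 0 < x.2.2 →
      fderiv ℝ Λ (Λinv x) (h (Λinv x)) =
        (-(ϱ / 2) * x.1, -(ϱ / 2) * x.2.1,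
          x.2.2 * (μ - κ * ρ / 2 + (κ * ρ * ϱ / 4 - κ ^ 2 * ρ ^ 2 / 8) * (x.1 ^ 2 + x.2.1 ^ 2))) := by
  subst hΛ hΛinv hh
  exact fun x _ => transformed_drift_general hκ.ne' ρ ϱ μ x
end
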